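/- If a polynomial P of degree at most 2m (in one complex variable) vanishes at the 2m+2 points y = 0, 1, …, 2m+1, then P is identically zero; combined with the vanishing of Andrews's sum at these integer points and its polynomiality of degree ≤ 2m in y, this yields that Σ_{k=0}^{2m+1} (-2m-1)_k (y+2z+2m+2)_k (y+z+1/2)_k (y+2z+m+1)_k (z+m+1)_k / (k! (y/2+z+1/2)_k (y/2+z+1)_k (2z+2m+2)_k (2y+2z+1)_k) = 0 for all complex y avoiding poles. -/

import Mathlib

/-- The rising factorial (Pochhammer symbol) `(a)_k`. -/
noncomputable def rf (a : ℂ) (k : ℕ) : ℂ := (ascPochhammer ℂ k).eval a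

theorem rf_zero (a : ℂ) : rf a 0 = 1 := by simp [rf]

theorem rf_succ (a : ℂ) (k : ℕ) : rf a (k + 1) = rf a k * (a + k) := by
  simp [rf, ascPochhammer_succ_eval]

theorem rf_add (a : ℂ) (i j : ℕ) : rf a (i + j) = rf a i * rf (a + i) j := by
  induction j with
  | zero => simp [rf_zero]
  | succ j ih => rw [← add_assoc, rf_succ, rf_succ, ih]; push_cast; ring

theorem rf_ne_of_le {a : ℂ} {i k : ℕ} (h : i ≤ k) (hk : rf a k ≠ 0) : rf a i ≠ 0 := by
  obtain ⟨j, rfl⟩ := Nat.exists_eq_add_of_le h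
  rw [rf_add] at hk
  exact left_ne_zero_of_mul hk

theorem rf_dup_even (x : ℂ) (f : ℕ) :
    rf (2 * x + 1) (2 * f) = 4 ^ f * rf (x + 1 / 2) f * rf (x + 1) f := by
  induction f with
  | zero => simp [rf_zero]
  | succ f ih =>
    rw [show 2 * (f + 1) = 2 * f + 1 + 1 by ring, rf_succ, rf_succ, ih, rf_succ, rf_succ]
    push_cast; ring

theorem rf_dup_odd (x : ℂ) (f : ℕ) :
    rf (2 * x + 1) (2 * f + 1) = 2 * 4 ^ f * rf (x + 1 / 2) (f + 1) * rf (x + 1) f := by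
  rw [rf_succ, rf_dup_even, rf_succ]; push_cast; ring

/-- first polynomial factor -/
noncomputable def tA (m k : ℕ) (x : ℂ) : ℂ :=
  (1 / 2) ^ k * rf (x + 1 / 2 + (k - k / 2 : ℕ)) (k / 2) * rf (x + 1 + (k / 2 : ℕ)) (m - k / 2)

theorem tA_spec (m k : ℕ) (hk : k ≤ 2 * m + 1) (x : ℂ) :
    rf (x + 1 / 2) k * rf (x + 1) m = tA m k x * rf (2 * x + 1) k := by
  have hm : rf (x + 1) m = rf (x + 1) (k / 2) * rf (x + 1 + (k / 2 : ℕ)) (m - k / 2) := by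
    rw [← rf_add]; congr 1; omega
  have hk' : rf (x + 1 / 2) k =
      rf (x + 1 / 2) (k - k / 2) * rf (x + 1 / 2 + (k - k / 2 : ℕ)) (k / 2) := by
    rw [← rf_add]; congr 1; omega
  have hd : rf (2 * x + 1) k = 2 ^ k * rf (x + 1 / 2) (k - k / 2) * rf (x + 1) (k / 2) := by
    rcases Nat.even_or_odd' k with ⟨f, rfl | rfl⟩
    · rw [rf_dup_even, show 2 * f / 2 = f by omega, show 2 * f - f = f by omega, pow_mul]
      norm_num
    · rw [rf_dup_odd, show (2 * f + 1) / 2 = f by omega, show 2 * f + 1 - f = f + 1 by omega,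
        pow_succ, pow_mul, show (2 : ℂ) ^ 2 = 4 by norm_num]
      ring
  have h2 : ((1 : ℂ) / 2) ^ k * 2 ^ k = 1 := by rw [← mul_pow]; norm_num
  rw [hm, hk', hd, tA]
  linear_combination (-(rf (x + 1 / 2) (k - k / 2) * rf (x + 1 / 2 + (k - k / 2 : ℕ)) (k / 2) *
    rf (x + 1) (k / 2) * rf (x + 1 + (k / 2 : ℕ)) (m - k / 2))) * h2

/-- second polynomial factor -/
noncomputable def tB (m k : ℕ) (w : ℂ) : ℂ :=
  if k ≤ m then 4 ^ k * rf (w + 2 * m + 2) k * rf (w + 2 * k + 1) (m - k)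
  else 4 ^ k * rf (w + 2 * m + 2) (k - m - 1) * rf (w + 2 * k + 1) (2 * m + 1 - k)

theorem tB_spec (m k : ℕ) (hk : k ≤ 2 * m + 1) (w : ℂ) :
    rf (w + 2 * m + 2) k * rf (w + m + 1) k * rf (w + 1) m =
      tB m k w * (rf (w / 2 + 1 / 2) k * rf (w / 2 + 1) k) := by
  have hd : rf (w + 1) (2 * k) = 4 ^ k * rf (w / 2 + 1 / 2) k * rf (w / 2 + 1) k := by
    rw [← rf_dup_even]; congr 1; ring
  have h1 : rf (w + 1) m * rf (w + m + 1) k = rf (w + 1) (m + k) := by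
    rw [rf_add]; congr 2; ring
  unfold tB
  split_ifs with h
  · have h2 : rf (w + 1) (m + k) = rf (w + 1) (2 * k) * rf (w + 2 * k + 1) (m - k) := by
      rw [show m + k = 2 * k + (m - k) by omega, rf_add]; congr 2; push_cast; ring
    linear_combination rf (w + 2 * m + 2) k * (h1 + h2 + rf (w + 2 * k + 1) (m - k) * hd)
  · obtain ⟨j, rfl⟩ : ∃ j, k = m + 1 + j := ⟨k - (m + 1), by omega⟩
    obtain ⟨i, rfl⟩ : ∃ i, m = j + i := ⟨m - j, by omega⟩
    have e1 : j + i + 1 + j - (j + i) - 1 = j := by omega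
    have e2 : 2 * (j + i) + 1 - (j + i + 1 + j) = i := by omega
    rw [e1, e2]
    set m := j + i with hm
    set k := m + 1 + j with hkk
    have a1 : rf (w + 2 * m + 2) k = rf (w + 2 * m + 2) j *
        (rf (w + 2 * m + 2 + j) (j + 1) * rf (w + 2 * k + 1) i) := by
      have e : w + 2 * (k : ℂ) + 1 = w + 2 * m + 2 + j + (j + 1 : ℕ) := by
        rw [hkk]; push_cast; ring
      rw [e, ← rf_add, ← rf_add]
      congr 1; omega
    have a2 : rf (w + 1) (2 * k) = rf (w + 1) (m + k) * rf (w + 2 * m + 2 + j) (j + 1) := by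
      rw [show 2 * k = m + k + (j + 1) by omega, rf_add]
      congr 2
      rw [hkk]; push_cast; ring
    rw [a1]
    linear_combination (rf (w + 2 * m + 2) j * rf (w + 2 * k + 1) i) *
      (rf (w + 2 * m + 2 + j) (j + 1) * h1 - a2 + hd)

/-- the polynomial version of the term -/
noncomputable def tQ (m k : ℕ) (y z : ℂ) : ℂ :=
  rf (-2 * m - 1) k / (k.factorial : ℂ) * tA m k (y + z) * tB m k (y + 2 * z) *
    (rf (z + m + 1) k * rf (2 * z + 2 * m + 2 + k) (2 * m + 1 - k))

/-- Andrews's term -/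
noncomputable def tS (m k : ℕ) (y z : ℂ) : ℂ :=
  rf (-2 * m - 1) k * rf (y + 2 * z + 2 * m + 2) k * rf (y + z + 1 / 2) k *
              rf (y + 2 * z + m + 1) k * rf (z + m + 1) k /
            ((k.factorial : ℂ) * rf (y / 2 + z + 1 / 2) k * rf (y / 2 + z + 1) k *
              rf (2 * z + 2 * m + 2) k * rf (2 * y + 2 * z + 1) k)

theorem tQ_eq (m k : ℕ) (hk : k ≤ 2 * m + 1) (y z : ℂ)
    (h : rf (y / 2 + z + 1 / 2) k ≠ 0 ∧ rf (y / 2 + z + 1) k ≠ 0 ∧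
          rf (2 * z + 2 * m + 2) k ≠ 0 ∧ rf (2 * y + 2 * z + 1) k ≠ 0) :
    tQ m k y z = rf (y + z + 1) m * rf (y + 2 * z + 1) m * rf (2 * z + 2 * m + 2) (2 * m + 1) *
      tS m k y z := by
  obtain ⟨h1, h2, h3, h4⟩ := h
  have hA := tA_spec m k hk (y + z)
  have hB := tB_spec m k hk (y + 2 * z)
  have hC : rf (2 * z + 2 * m + 2) (2 * m + 1) =
      rf (2 * z + 2 * m + 2) k * rf (2 * z + 2 * m + 2 + k) (2 * m + 1 - k) := by
    rw [← rf_add]; congr 1; omega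
  rw [show 2 * (y + z) + 1 = 2 * y + 2 * z + 1 by ring] at hA
  rw [show (y + 2 * z) / 2 + 1 / 2 = y / 2 + z + 1 / 2 by ring,
    show (y + 2 * z) / 2 + 1 = y / 2 + z + 1 by ring] at hB
  have hf : (k.factorial : ℂ) ≠ 0 := by exact_mod_cast k.factorial_ne_zero
  have hA' := eq_div_of_mul_eq h4 hA.symm
  have hB' := eq_div_of_mul_eq (mul_ne_zero h1 h2) hB.symm
  rw [tQ, tS, hC, hA', hB']
  generalize rf (y + z + 1 / 2) k = a1 at *
  generalize rf (2 * y + 2 * z + 1) k = a2 at *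
  generalize rf (y / 2 + z + 1 / 2) k = a3 at *
  generalize rf (y / 2 + z + 1) k = a4 at *
  generalize rf (2 * z + 2 * m + 2) k = a5 at *
  generalize (k.factorial : ℂ) = a6 at *
  field_simp

/-- being a polynomial function of degree at most d -/
def IsPol (d : ℕ) (f : ℂ → ℂ) : Prop :=
  ∃ p : Polynomial ℂ, p.natDegree ≤ d ∧ ∀ x, p.eval x = f x

theorem IsPol.const (c : ℂ) : IsPol 0 (fun _ => c) := ⟨Polynomial.C c, by simp, by simp⟩

theorem IsPol.mul {d e : ℕ} {f g : ℂ → ℂ} (hf : IsPol d f) (hg : IsPol e g) :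
    IsPol (d + e) (fun x => f x * g x) := by
  obtain ⟨p, hp, hp'⟩ := hf
  obtain ⟨q, hq, hq'⟩ := hg
  exact ⟨p * q, Polynomial.natDegree_mul_le.trans (by omega), fun x => by simp [hp', hq']⟩

theorem IsPol.mono {d e : ℕ} {f : ℂ → ℂ} (hf : IsPol d f) (h : d ≤ e) : IsPol e f := by
  obtain ⟨p, hp, hp'⟩ := hf
  exact ⟨p, hp.trans h, hp'⟩

theorem IsPol.sum {d : ℕ} (s : Finset ℕ) {f : ℕ → ℂ → ℂ} (hf : ∀ k ∈ s, IsPol d (f k)) :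
    IsPol d (fun x => ∑ k ∈ s, f k x) := by
  choose! p hp hp' using hf
  refine ⟨∑ k ∈ s, p k, Polynomial.natDegree_sum_le_of_forall_le s p hp, fun x => ?_⟩
  rw [Polynomial.eval_finsetSum]
  exact Finset.sum_congr rfl fun k hk => hp' k hk x

theorem IsPol.rf (b a : ℂ) (n : ℕ) : IsPol n (fun x => rf (b * x + a) n) := by
  refine ⟨(ascPochhammer ℂ n).comp (Polynomial.C b * Polynomial.X + Polynomial.C a), ?_, ?_⟩
  · refine Polynomial.natDegree_comp_le.trans ?_
    rw [ascPochhammer_natDegree]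
    exact (Nat.mul_le_mul_left n Polynomial.natDegree_linear_le).trans (by omega)
  · intro x; simp [_root_.rf]

theorem IsPol.rf' {g : ℂ → ℂ} (b a : ℂ) (n : ℕ) (h : ∀ x, g x = b * x + a) :
    IsPol n (fun x => _root_.rf (g x) n) := by
  obtain rfl : g = fun x => b * x + a := funext h
  exact IsPol.rf b a n

theorem isPol_tA (m k : ℕ) (hk : k ≤ 2 * m + 1) {g : ℂ → ℂ} (b a : ℂ)
    (h : ∀ x, g x = b * x + a) : IsPol m (fun x => tA m k (g x)) := by
  unfold tA
  refine (((IsPol.const _).mul (IsPol.rf' b (a + 1 / 2 + (k - k / 2 : ℕ)) _ ?_)).mul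
    (IsPol.rf' b (a + 1 + (k / 2 : ℕ)) _ ?_)).mono (by omega)
  · intro x; rw [h]; ring
  · intro x; rw [h]; ring

theorem isPol_tB (m k : ℕ) (hk : k ≤ 2 * m + 1) {g : ℂ → ℂ} (b a : ℂ)
    (h : ∀ x, g x = b * x + a) : IsPol m (fun x => tB m k (g x)) := by
  unfold tB
  split_ifs with hkm
  · refine (((IsPol.const _).mul (IsPol.rf' b (a + 2 * m + 2) _ ?_)).mul
      (IsPol.rf' b (a + 2 * k + 1) _ ?_)).mono (by omega)
    · intro x; rw [h]; ring
    · intro x; rw [h]; ring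
  · refine (((IsPol.const _).mul (IsPol.rf' b (a + 2 * m + 2) _ ?_)).mul
      (IsPol.rf' b (a + 2 * k + 1) _ ?_)).mono (by omega)
    · intro x; rw [h]; ring
    · intro x; rw [h]; ring

theorem isPol_tQ_y (m k : ℕ) (hk : k ≤ 2 * m + 1) (z : ℂ) :
    IsPol (2 * m) (fun y => tQ m k y z) := by
  unfold tQ
  refine ((((IsPol.const _).mul (isPol_tA m k hk 1 z ?_)).mul
    (isPol_tB m k hk 1 (2 * z) ?_)).mul (IsPol.const _)).mono (by omega)
  · intro x; ring
  · intro x; ring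

theorem isPol_tQ_z (m k : ℕ) (hk : k ≤ 2 * m + 1) (y : ℂ) :
    IsPol (4 * m + 1) (fun z => tQ m k y z) := by
  unfold tQ
  refine ((((IsPol.const _).mul (isPol_tA m k hk 1 y ?_)).mul
    (isPol_tB m k hk 2 y ?_)).mul ((IsPol.rf' 1 (m + 1) k ?_).mul
      (IsPol.rf' 2 (2 * m + 2 + k) _ ?_))).mono (by omega)
  all_goals intro x; ring

theorem rf_ratio (a : ℂ) (n : ℕ) (ha : ∀ k, rf a k ≠ 0) {c : ℂ} (hc : c = a + n) :
    ∃ g, IsPol n g ∧ ∀ k : ℕ, g k * rf a k = rf c k := by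
  refine ⟨fun x => 1 / rf a n * rf (1 * x + a) n, ?_, ?_⟩
  · exact ((IsPol.const _).mul (IsPol.rf 1 a n)).mono (by omega)
  · intro k
    have h1 := rf_add a n k
    have h2 := rf_add a k n
    rw [add_comm, h1] at h2
    have := ha n
    subst hc
    change 1 / rf a n * rf (1 * (k : ℂ) + a) n * rf a k = _
    rw [show 1 * (k : ℂ) + a = a + k by ring]
    field_simp
    linear_combination -h2

theorem sum_zero (n : ℕ) {g : ℂ → ℂ} {d : ℕ} (hg : IsPol d g) (hd : d < n) {c : ℂ}
    (hc : c = -n) :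
    ∑ k ∈ Finset.range (n + 1), rf c k / (k.factorial : ℂ) * g k = 0 := by
  obtain ⟨p, hp, hp'⟩ := hg
  have h0 := congr_fun (Polynomial.fwdDiff_iter_eq_zero_of_degree_lt (hp.trans_lt hd)) (0 : ℂ)
  rw [fwdDiff_iter_eq_sum_shift] at h0
  have : ∑ k ∈ Finset.range (n + 1), rf c k / (k.factorial : ℂ) * g k = (-1) ^ n *
      ∑ k ∈ Finset.range (n + 1), ((-1 : ℤ) ^ (n - k) * n.choose k) • p.eval (0 + k • (1 : ℂ)) := by
    rw [Finset.mul_sum]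
    refine Finset.sum_congr rfl fun k hk => ?_
    have hk' : k ≤ n := by simpa [Nat.lt_succ_iff] using hk
    have h1 : rf c k = (-1) ^ k * (k.factorial * n.choose k : ℕ) := by
      rw [rf, hc, ascPochhammer_eval_neg_eq_descPochhammer, descPochhammer_eval_eq_descFactorial,
        Nat.descFactorial_eq_factorial_mul_choose]
    have h2 : ((-1 : ℂ)) ^ n * (-1) ^ (n - k) = (-1) ^ k := by
      rw [← pow_add, show n + (n - k) = k + 2 * (n - k) by omega, pow_add, pow_mul]; simp
    have hf : (k.factorial : ℂ) ≠ 0 := by exact_mod_cast k.factorial_ne_zero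
    rw [h1, ← hp', zsmul_eq_mul, ← h2]
    push_cast
    field_simp
    simp
  rw [this, h0]; simp

theorem rf_pos_ne {a : ℂ} (r : ℝ) (hr : 0 < r) (h : a = r) (k : ℕ) : rf a k ≠ 0 := by
  have h1 : rf a k = ((ascPochhammer ℝ k).eval r : ℝ) := by
    subst h
    induction k with
    | zero => simp [rf]
    | succ k ih => rw [rf_succ, ih, ascPochhammer_succ_eval]; push_cast; ring
  rw [h1]
  exact_mod_cast (ascPochhammer_pos k r hr).ne'

theorem nat_case (m j N : ℕ) (hj : j ≤ 2 * m + 1) :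
    ∑ k ∈ Finset.range (2 * m + 2), tS m k j N = 0 := by
  have n1 : ∀ k, rf ((j : ℂ) / 2 + N + 1 / 2) k ≠ 0 :=
    rf_pos_ne (j / 2 + N + 1 / 2) (by positivity) (by push_cast; ring)
  have n2 : ∀ k, rf ((j : ℂ) / 2 + N + 1) k ≠ 0 :=
    rf_pos_ne (j / 2 + N + 1) (by positivity) (by push_cast; ring)
  have n3 : ∀ k, rf (2 * (N : ℂ) + 2 * m + 2) k ≠ 0 :=
    rf_pos_ne (2 * N + 2 * m + 2) (by positivity) (by push_cast; ring)
  have n4 : ∀ k, rf (2 * (j : ℂ) + 2 * N + 1) k ≠ 0 :=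
    rf_pos_ne (2 * j + 2 * N + 1) (by positivity) (by push_cast; ring)
  have hX : ∃ g, IsPol m g ∧ ∀ k : ℕ,
      g k * (rf ((j : ℂ) / 2 + N + 1 / 2) k * rf ((j : ℂ) / 2 + N + 1) k) =
        rf (j + N + 1 / 2) k * rf (N + m + 1) k := by
    rcases Nat.even_or_odd' j with ⟨i, rfl | rfl⟩
    · obtain ⟨l, rfl⟩ : ∃ l, m = i + l := ⟨m - i, by omega⟩
      obtain ⟨g, hg, hg'⟩ := rf_ratio _ i n1 (c := (2 * i : ℕ) + N + 1 / 2) (by push_cast; ring)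
      obtain ⟨f, hf, hf'⟩ := rf_ratio _ l n2 (c := N + (i + l : ℕ) + 1) (by push_cast; ring)
      refine ⟨_, hg.mul hf, fun k => ?_⟩
      rw [← hg', ← hf']; ring
    · obtain ⟨l, rfl⟩ : ∃ l, m = i + l := ⟨m - i, by omega⟩
      obtain ⟨g, hg, hg'⟩ := rf_ratio _ i n2 (c := (2 * i + 1 : ℕ) + N + 1 / 2)
        (by push_cast; ring)
      obtain ⟨f, hf, hf'⟩ := rf_ratio _ l n1 (c := N + (i + l : ℕ) + 1) (by push_cast; ring)
      refine ⟨_, hg.mul hf, fun k => ?_⟩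
      rw [← hg', ← hf']; ring
  have hY : ∃ g, IsPol m g ∧ ∀ k : ℕ,
      g k * (rf (2 * (N : ℂ) + 2 * m + 2) k * rf (2 * (j : ℂ) + 2 * N + 1) k) =
        rf (j + 2 * N + 2 * m + 2) k * rf (j + 2 * N + m + 1) k := by
    rcases le_or_gt j m with h | h
    · obtain ⟨l, rfl⟩ : ∃ l, m = j + l := ⟨m - j, by omega⟩
      obtain ⟨g, hg, hg'⟩ := rf_ratio _ j n3 (c := j + 2 * N + 2 * (j + l : ℕ) + 2)
        (by push_cast; ring)
      obtain ⟨f, hf, hf'⟩ := rf_ratio _ l n4 (c := j + 2 * N + (j + l : ℕ) + 1)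
        (by push_cast; ring)
      refine ⟨_, hg.mul hf, fun k => ?_⟩
      rw [← hg', ← hf']; ring
    · obtain ⟨i, rfl⟩ : ∃ i, j = m + 1 + i := ⟨j - (m + 1), by omega⟩
      obtain ⟨l, rfl⟩ : ∃ l, m = i + l := ⟨m - i, by omega⟩
      obtain ⟨g, hg, hg'⟩ := rf_ratio _ i n3
        (c := (i + l + 1 + i : ℕ) + 2 * N + (i + l : ℕ) + 1) (by push_cast; ring)
      obtain ⟨f, hf, hf'⟩ := rf_ratio _ l n4
        (c := (i + l + 1 + i : ℕ) + 2 * N + 2 * (i + l : ℕ) + 2) (by push_cast; ring)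
      refine ⟨_, hg.mul hf, fun k => ?_⟩
      rw [← hg', ← hf']; ring
  obtain ⟨g, hg, hg'⟩ := hX
  obtain ⟨f, hf, hf'⟩ := hY
  rw [← sum_zero (2 * m + 1) (hg.mul hf) (by omega) (c := -2 * m - 1) (by push_cast; ring)]
  refine Finset.sum_congr rfl fun k _ => ?_
  have e1 := eq_div_of_mul_eq (mul_ne_zero (n1 k) (n2 k)) (hg' k)
  have e2 := eq_div_of_mul_eq (mul_ne_zero (n3 k) (n4 k)) (hf' k)
  rw [e1, e2, tS, div_mul_div_comm, div_mul_div_comm]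
  congr 1 <;> ring

theorem pol_zero (n : ℕ) (P : Polynomial ℂ) (hP : P.natDegree ≤ n)
    (h : ∀ j : ℕ, j ≤ n → P.eval (j : ℂ) = 0) : P = 0 := by
  refine Polynomial.eq_zero_of_natDegree_lt_card_of_eval_eq_zero P
    (f := fun i : Fin (n + 1) => ((i : ℕ) : ℂ)) ?_ ?_ ?_
  · intro a b hab; exact Fin.ext (Nat.cast_injective (R := ℂ) hab)
  · intro i; exact h i (by omega)
  · simp; omega

theorem sum_tQ (m : ℕ) (y z : ℂ) : ∑ k ∈ Finset.range (2 * m + 2), tQ m k y z = 0 := by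
  have key : ∀ (N : ℕ) (y : ℂ), ∑ k ∈ Finset.range (2 * m + 2), tQ m k y N = 0 := by
    intro N y
    obtain ⟨p, hp, hp'⟩ := IsPol.sum (Finset.range (2 * m + 2)) (f := fun k y => tQ m k y N)
      (fun k hk => isPol_tQ_y m k (by simp at hk; omega) N)
    simp only at hp'
    have : p = 0 := by
      refine pol_zero _ p hp fun j hj => ?_
      rw [hp', ← mul_zero (rf (j + N + 1) m * rf (j + 2 * N + 1) m *
        rf (2 * N + 2 * m + 2) (2 * m + 1)), ← nat_case m j N (by omega), Finset.mul_sum]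
      refine Finset.sum_congr rfl fun k hk => tQ_eq m k (by simp at hk; omega) _ _ ⟨?_, ?_, ?_, ?_⟩
      · exact rf_pos_ne (j / 2 + N + 1 / 2) (by positivity) (by push_cast; ring) k
      · exact rf_pos_ne (j / 2 + N + 1) (by positivity) (by push_cast; ring) k
      · exact rf_pos_ne (2 * N + 2 * m + 2) (by positivity) (by push_cast; ring) k
      · exact rf_pos_ne (2 * j + 2 * N + 1) (by positivity) (by push_cast; ring) k
    rw [← hp', this]; simp
  obtain ⟨p, hp, hp'⟩ := IsPol.sum (Finset.range (2 * m + 2)) (f := fun k z => tQ m k y z)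
      (fun k hk => isPol_tQ_z m k (by simp at hk; omega) y)
  simp only at hp'
  have : p = 0 := pol_zero _ p hp fun j hj => by rw [hp', key]
  rw [← hp', this]; simp

theorem vanishing_poly_and_andrews (m : ℕ) :
    (∀ P : Polynomial ℂ, P.degree ≤ (2 * m : ℕ) →
        (∀ j : ℕ, j ≤ 2 * m + 1 → P.eval (j : ℂ) = 0) → P = 0) ∧
    (∀ y z : ℂ,
      (∀ k ≤ 2 * m + 1,
        rf (y / 2 + z + 1 / 2) k ≠ 0 ∧ rf (y / 2 + z + 1) k ≠ 0 ∧
          rf (2 * z + 2 * m + 2) k ≠ 0 ∧ rf (2 * y + 2 * z + 1) k ≠ 0) →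
      ∑ k ∈ Finset.range (2 * m + 2),
          rf (-2 * m - 1) k * rf (y + 2 * z + 2 * m + 2) k * rf (y + z + 1 / 2) k *
              rf (y + 2 * z + m + 1) k * rf (z + m + 1) k /
            ((k.factorial : ℂ) * rf (y / 2 + z + 1 / 2) k * rf (y / 2 + z + 1) k *
              rf (2 * z + 2 * m + 2) k * rf (2 * y + 2 * z + 1) k) = 0) := by
  refine ⟨fun P hP h => pol_zero (2 * m) P (Polynomial.natDegree_le_of_degree_le hP)
    fun j hj => h j (by omega), fun y z h => ?_⟩
  obtain ⟨h1, h2, h3, h4⟩ := h (2 * m + 1) le_rfl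
  change ∑ k ∈ Finset.range (2 * m + 2), tS m k y z = 0
  have hs := sum_tQ m y z
  rw [Finset.sum_congr rfl fun k hk => tQ_eq m k (by simp at hk; omega) y z
    (h k (by simp at hk; omega)), ← Finset.mul_sum] at hs
  refine (mul_eq_zero.mp hs).resolve_left (mul_ne_zero (mul_ne_zero ?_ ?_) h3)
  · rw [show 2 * y + 2 * z + 1 = 2 * (y + z) + 1 by ring, rf_dup_odd] at h4
    exact right_ne_zero_of_mul h4
  · refine rf_ne_of_le (k := 2 * (2 * m + 1)) (by omega) ?_
    rw [show y + 2 * z + 1 = 2 * (y / 2 + z) + 1 by ring, rf_dup_even]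
    exact mul_ne_zero (mul_ne_zero (pow_ne_zero _ (by norm_num)) h1) h2
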